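/- A two-colouring of the vertex set {o_1,q_1,p_1,r_1,o_2,q_2,p_2,r_2,o_3,q_3,p_3,r_3,a} extends to an almost two-coloured perfect matching of the clause gadget K if and only if both of the following hold: (1) for each t = 1, 2, 3, the vertices o_t, p_t, q_t, r_t all receive the same colour; (2) for exactly two values of t ∈ {1,2,3}, the vertices o_t, p_t, q_t, r_t receive the same colour as a. -/

import Mathlib

/-- An almost two-coloured perfect matching of `G`: a two-colouring (black/white,
modelled by `Bool`) of the vertices in which every vertex of degree at least two
(i.e. having two distinct neighbours) has exactly one neighbour of the same colour. -/
def IsAlmostTCPM {V : Type*} (G : SimpleGraph V) (c : V → Bool) : Prop :=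
  ∀ v, (∃ w₁ w₂, w₁ ≠ w₂ ∧ G.Adj v w₁ ∧ G.Adj v w₂) →
    ∃! w, G.Adj v w ∧ c w = c v

/-- The vertices of one copy of `H` inside the clause gadget `K`: the vertices of `H`
other than `a`, `m`, `n` (which are identified or deleted in the construction of `K`). -/
inductive KHV | b | c | d | e | f | g | h | i | j | k | l | o | p | q | r
deriving DecidableEq

/-- The vertices of the clause gadget `K`: the identified vertex `a`, together with
three copies (indexed by `Fin 3`) of the vertices of `H` other than `a`, `m`, `n`. -/
inductive KV | a | v (t : Fin 3) (x : KHV)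
deriving DecidableEq

open KHV in
/-- The edges of `H` not incident to `a`, `m`, `n`, used inside each copy of `H` in `K`. -/
def KCopyEdges : List (KHV × KHV) :=
  [(b,c),(b,d),(c,e),(c,f),(e,f),(d,g),(d,h),(g,h),(e,i),(f,j),(g,k),
   (h,l),(j,k),(i,o),(j,o),(o,q),(k,p),(l,p),(p,r)]

/-- The edges of the clause gadget `K`: the edges inside the three copies of `H`,
the edges `a bₜ` for `t = 1,2,3`, and the edges `l₁i₂`, `l₂i₃`, `l₃i₁`. -/
def KEdges : List (KV × KV) :=
  ((List.finRange 3).flatMap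
    (fun t => KCopyEdges.map (fun e => (KV.v t e.1, KV.v t e.2)))) ++
  [(KV.a, KV.v 0 KHV.b), (KV.a, KV.v 1 KHV.b), (KV.a, KV.v 2 KHV.b),
   (KV.v 0 KHV.l, KV.v 1 KHV.i), (KV.v 1 KHV.l, KV.v 2 KHV.i),
   (KV.v 2 KHV.l, KV.v 0 KHV.i)]

/-- The clause gadget graph `K`. -/
def KG : SimpleGraph KV := SimpleGraph.fromRel (fun x y => (x, y) ∈ KEdges)

/-- The set of vertices `{o₁,q₁,p₁,r₁,o₂,q₂,p₂,r₂,o₃,q₃,p₃,r₃,a}` of `K`. -/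
def KBoundary : Set KV :=
  {KV.a} ∪ {x | ∃ t, x = KV.v t KHV.o ∨ x = KV.v t KHV.p ∨
    x = KV.v t KHV.q ∨ x = KV.v t KHV.r}

/-- All vertices of a copy. -/
instance instFintypeKHV : Fintype KHV :=
  ⟨{.b, .c, .d, .e, .f, .g, .h, .i, .j, .k, .l, .o, .p, .q, .r}, by intro x; cases x <;> decide⟩

/-- All vertices of the gadget. -/
instance instFintypeKV : Fintype KV :=
  Fintype.ofEquiv (Option (Fin 3 × KHV))
    { toFun := fun x => match x with
        | none => KV.a
        | some (t, x) => KV.v t x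
      invFun := fun x => match x with
        | KV.a => none
        | KV.v t x => some (t, x)
      left_inv := by rintro (_ | ⟨t, x⟩) <;> rfl
      right_inv := by rintro (_ | ⟨t, x⟩) <;> rfl }

/-- The three neighbours of each vertex (repeated for leaves). -/
def nb : KV → KV × KV × KV
  | .a => (.v 0 .b, .v 1 .b, .v 2 .b)
  | .v t .b => (.a, .v t .c, .v t .d)
  | .v t .c => (.v t .b, .v t .e, .v t .f)
  | .v t .d => (.v t .b, .v t .g, .v t .h)
  | .v t .e => (.v t .c, .v t .f, .v t .i)
  | .v t .f => (.v t .c, .v t .e, .v t .j)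
  | .v t .g => (.v t .d, .v t .h, .v t .k)
  | .v t .h => (.v t .d, .v t .g, .v t .l)
  | .v t .i => (.v t .e, .v t .o, .v (t + 2) .l)
  | .v t .j => (.v t .f, .v t .k, .v t .o)
  | .v t .k => (.v t .g, .v t .j, .v t .p)
  | .v t .l => (.v t .h, .v t .p, .v (t + 1) .i)
  | .v t .o => (.v t .i, .v t .j, .v t .q)
  | .v t .p => (.v t .k, .v t .l, .v t .r)
  | .v t .q => (.v t .o, .v t .o, .v t .o)
  | .v t .r => (.v t .p, .v t .p, .v t .p)

theorem adj_iff (x y : KV) :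
    KG.Adj x y ↔ (y = (nb x).1 ∨ y = (nb x).2.1 ∨ y = (nb x).2.2) := by
  have H : ∀ x y : KV, (x ≠ y ∧ ((x, y) ∈ KEdges ∨ (y, x) ∈ KEdges)) ↔
      (y = (nb x).1 ∨ y = (nb x).2.1 ∨ y = (nb x).2.2) := by
    decide +kernel
  rw [KG, SimpleGraph.fromRel_adj]
  exact H x y

/-- Exactly one of `x`, `y`, `z` equals `s`. -/
def ex1 (s x y z : Bool) : Bool :=
  if x = s then (y != s && z != s) else if y = s then z != s else z == s

theorem ex1_iff {c : KV → Bool} {s : Bool} {x y z : KV} (hxy : x ≠ y) (hxz : x ≠ z) (hyz : y ≠ z) :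
    (∃! w, (w = x ∨ w = y ∨ w = z) ∧ c w = s) ↔ ex1 s (c x) (c y) (c z) = true := by
  constructor
  · rintro ⟨w, ⟨hw, hs⟩, hu⟩
    have h1 := fun h => hu x ⟨by simp, h⟩
    have h2 := fun h => hu y ⟨by simp, h⟩
    have h3 := fun h => hu z ⟨by simp, h⟩
    unfold ex1
    grind
  · intro h
    unfold ex1 at h
    by_cases h1 : c x = s
    · exact ⟨x, by simp [h1], by grind⟩
    · by_cases h2 : c y = s
      · exact ⟨y, by simp [h2], by grind⟩
      · exact ⟨z, by grind, by grind⟩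

/-- The vertex is not a leaf. -/
def nonleaf (v : KV) : Prop := (nb v).1 ≠ (nb v).2.1

instance instDecNonleaf (v : KV) : Decidable (nonleaf v) :=
  inferInstanceAs (Decidable (_ ≠ _))

theorem nb_distinct : ∀ v, nonleaf v → (nb v).1 ≠ (nb v).2.2 ∧ (nb v).2.1 ≠ (nb v).2.2 := by
  decide +kernel

theorem nb_leaf : ∀ v, ¬ nonleaf v → (nb v).1 = (nb v).2.1 ∧ (nb v).1 = (nb v).2.2 := by
  decide +kernel

theorem tcpm_iff (c : KV → Bool) : IsAlmostTCPM KG c ↔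
    ∀ v, nonleaf v → ex1 (c v) (c (nb v).1) (c (nb v).2.1) (c (nb v).2.2) = true := by
  unfold IsAlmostTCPM
  refine forall_congr' fun v => ?_
  simp only [adj_iff]
  by_cases hv : nonleaf v
  · obtain ⟨h1, h2⟩ := nb_distinct v hv
    rw [ex1_iff hv h1 h2]
    constructor
    · intro h _
      exact h ⟨(nb v).1, (nb v).2.1, hv, by simp, by simp⟩
    · intro h _
      exact h hv
  · obtain ⟨h1, h2⟩ := nb_leaf v hv
    constructor
    · intro _ h
      exact absurd h hv
    · rintro _ ⟨w₁, w₂, hne, ha, hb⟩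
      grind

/-- The behaviour of a single copy. -/
theorem copy_forced : ∀ b c d e f g h : Bool,
    ex1 c b e f = true → ex1 d b g h = true → ∀ i j k l : Bool,
    ex1 e c f i = true → ex1 f c e j = true → ex1 g d h k = true → ex1 h d g l = true →
    ∀ o p : Bool, ex1 j f k o = true → ex1 k g j p = true → ∀ a x y : Bool,
    ex1 b a c d = true → ex1 i e o x = true → ex1 l h p y = true → ∀ q r : Bool,
    ex1 o i j q = true → ex1 p k l r = true →
    o = !b ∧ p = !b ∧ q = !b ∧ r = !b := by
  decide +kernel

/-- The colouring of a copy whose vertex `b` is coloured `false`; the number is the position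
relative to the copy whose `b` has the colour of `a`. -/
def base : Fin 3 → KHV → Bool
  | _, .b | _, .i | _, .l | _, .j | _, .k => false
  | _, .o | _, .p | _, .q | _, .r => true
  | 0, .c | 0, .d | 0, .f | 0, .g => true
  | 0, .e | 0, .h => false
  | 1, .c | 1, .f | 1, .g | 1, .h => true
  | 1, .d | 1, .e => false
  | 2, .d | 2, .e | 2, .f | 2, .g => true
  | 2, .c | 2, .h => false

/-- The colouring of the whole gadget with special copy `s` and colour `a` of the vertex `a`. -/
def full (s : Fin 3) (a : Bool) : KV → Bool
  | .a => a
  | .v t x => xor (base (t - s) x) (if t = s then a else !a)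

theorem full_ok (s : Fin 3) (a : Bool) : IsAlmostTCPM KG (full s a) := by
  rw [tcpm_iff]
  revert s a
  decide +kernel

theorem count_fwd : ∀ a x y z : Bool, ex1 a x y z = true →
    (Finset.univ.filter (fun t : Fin 3 => (![!x, !y, !z] t) = a)).card = 2 := by
  decide +kernel

theorem count_bwd : ∀ a x y z : Bool,
    (Finset.univ.filter (fun t : Fin 3 => (![x, y, z] t) = a)).card = 2 →
    ∃ s : Fin 3, ∀ t, ![x, y, z] t = if t = s then !a else a := by
  decide +kernel

/-- A two-colouring of `{o₁,q₁,p₁,r₁,o₂,q₂,p₂,r₂,o₃,q₃,p₃,r₃,a}` extends to an almost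
two-coloured perfect matching of the clause gadget `K` if and only if (1) for each `t`,
the vertices `oₜ, pₜ, qₜ, rₜ` all get the same colour, and (2) for exactly two values
of `t`, the vertices `oₜ, pₜ, qₜ, rₜ` get the same colour as `a`. -/
theorem stmt_4 (c₀ : KV → Bool) :
    (∃ c : KV → Bool, IsAlmostTCPM KG c ∧ ∀ x ∈ KBoundary, c x = c₀ x) ↔
    ((∀ t : Fin 3, c₀ (KV.v t KHV.o) = c₀ (KV.v t KHV.p) ∧
        c₀ (KV.v t KHV.o) = c₀ (KV.v t KHV.q) ∧
        c₀ (KV.v t KHV.o) = c₀ (KV.v t KHV.r)) ∧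
      (Finset.univ.filter (fun t : Fin 3 => c₀ (KV.v t KHV.o) = c₀ KV.a)).card = 2) := by
  have hvec : ∀ F : Fin 3 → Bool, F = ![F 0, F 1, F 2] := by
    intro F; funext t; fin_cases t <;> rfl
  constructor
  · rintro ⟨c, hc, hb⟩
    rw [tcpm_iff] at hc
    have key : ∀ t : Fin 3, c (.v t .o) = !c (.v t .b) ∧ c (.v t .p) = !c (.v t .b) ∧
        c (.v t .q) = !c (.v t .b) ∧ c (.v t .r) = !c (.v t .b) := by
      intro t
      exact copy_forced _ _ _ _ _ _ _
        (hc (.v t .c) (by simp [nonleaf, nb])) (hc (.v t .d) (by simp [nonleaf, nb])) _ _ _ _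
        (hc (.v t .e) (by simp [nonleaf, nb])) (hc (.v t .f) (by simp [nonleaf, nb]))
        (hc (.v t .g) (by simp [nonleaf, nb])) (hc (.v t .h) (by simp [nonleaf, nb])) _ _
        (hc (.v t .j) (by simp [nonleaf, nb])) (hc (.v t .k) (by simp [nonleaf, nb])) _ _ _
        (hc (.v t .b) (by simp [nonleaf, nb])) (hc (.v t .i) (by simp [nonleaf, nb]))
        (hc (.v t .l) (by simp [nonleaf, nb])) _ _
        (hc (.v t .o) (by simp [nonleaf, nb])) (hc (.v t .p) (by simp [nonleaf, nb]))
    have ha : c .a = c₀ .a := hb _ (by simp [KBoundary])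
    have ho : ∀ t, c (.v t .o) = c₀ (.v t .o) := fun t => hb _ (by simp [KBoundary])
    have hp : ∀ t, c (.v t .p) = c₀ (.v t .p) := fun t => hb _ (by simp [KBoundary])
    have hq : ∀ t, c (.v t .q) = c₀ (.v t .q) := fun t => hb _ (by simp [KBoundary])
    have hr : ∀ t, c (.v t .r) = c₀ (.v t .r) := fun t => hb _ (by simp [KBoundary])
    refine ⟨fun t => ?_, ?_⟩
    · obtain ⟨h1, h2, h3, h4⟩ := key t
      rw [← ho, ← hp, ← hq, ← hr, h1, h2, h3, h4]
      simp
    · have h := count_fwd _ _ _ _ (hc .a (by simp [nonleaf, nb]))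
      have e := hvec (fun t => c₀ (.v t .o))
      simp only [← ho, (key _).1] at e
      rw [← ha, ← h]
      congr 1
      ext t
      have e' := congrFun e t
      simp only [← ho, (key _).1, Finset.mem_filter, Finset.mem_univ, true_and]
      rw [e']
      rfl
  · rintro ⟨h1, h2⟩
    have e := hvec (fun t => c₀ (.v t .o))
    have e' := fun t => congrFun e t
    obtain ⟨s, hs⟩ := count_bwd (c₀ .a) (c₀ (.v 0 .o)) (c₀ (.v 1 .o)) (c₀ (.v 2 .o)) (by
      refine Eq.trans ?_ h2
      congr 1)
    have ho : ∀ t, c₀ (.v t .o) = if t = s then !c₀ .a else c₀ .a := by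
      intro t
      rw [e' t, hs t]
    refine ⟨full s (c₀ .a), full_ok _ _, ?_⟩
    rintro x (hx | ⟨t, rfl | rfl | rfl | rfl⟩)
    · rw [Set.mem_singleton_iff] at hx
      subst hx
      rfl
    · rw [ho t]
      by_cases h : t = s <;> simp [full, base, h]
    · rw [← (h1 t).1, ho t]
      by_cases h : t = s <;> simp [full, base, h]
    · rw [← (h1 t).2.1, ho t]
      by_cases h : t = s <;> simp [full, base, h]
    · rw [← (h1 t).2.2, ho t]
      by_cases h : t = s <;> simp [full, base, h]
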